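/- For every real number ξ, the limit as u → 0⁻ of (1/(2πi)) ∫_{−∞}^{∞} [η/((1+η²)(ξ + iu − η))] dη exists and equals 1/(2(ξ−i)). -/

import Mathlib

open MeasureTheory Complex

lemma aux_inv (w : ℂ) : Filter.Tendsto (fun η : ℝ => w / (η : ℂ)) Filter.atTop (nhds 0) := by
  have h : Filter.Tendsto (fun η : ℝ => ((η⁻¹ : ℝ) : ℂ)) Filter.atTop (nhds ((0 : ℝ) : ℂ)) :=
    (continuous_ofReal.tendsto 0).comp tendsto_inv_atTop_zero
  simpa [div_eq_mul_inv] using h.const_mul w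

lemma aux_top (w : ℂ) :
    Filter.Tendsto (fun η : ℝ => Complex.log ((η : ℂ) - w) - (Real.log η : ℂ)) Filter.atTop
      (nhds 0) := by
  have h1 : Filter.Tendsto (fun η : ℝ => 1 - w / (η : ℂ)) Filter.atTop (nhds 1) := by
    simpa using (aux_inv w).const_sub 1
  have h2 : Filter.Tendsto (fun η : ℝ => Complex.log (1 - w / (η : ℂ))) Filter.atTop
      (nhds 0) := by
    have := h1.clog one_mem_slitPlane
    simpa using this
  refine h2.congr' ?_
  have h3 : ∀ᶠ η : ℝ in Filter.atTop, 1 - w / (η : ℂ) ≠ 0 := h1.eventually_ne one_ne_zero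
  filter_upwards [h3, Filter.eventually_gt_atTop 0] with η h h0
  have hne : (η : ℂ) ≠ 0 := by exact_mod_cast h0.ne'
  have : (η : ℂ) - w = (η : ℂ) * (1 - w / η) := by field_simp
  rw [this, Complex.log_ofReal_mul h0 h]
  ring

lemma aux_bot (w l : ℂ) (S : Set ℂ) (hS : ∀ r : ℝ, 0 < r → -1 - w / (r : ℂ) ∈ S)
    (hl : Filter.Tendsto Complex.log (nhdsWithin (-1) S) (nhds l)) :
    Filter.Tendsto (fun η : ℝ => Complex.log ((η : ℂ) - w) - (Real.log (-η) : ℂ)) Filter.atBot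
      (nhds l) := by
  have h1 : Filter.Tendsto (fun η : ℝ => -1 - w / (η : ℂ)) Filter.atTop (nhds (-1)) := by
    simpa using (aux_inv w).const_sub (-1)
  have h2 : Filter.Tendsto (fun η : ℝ => -1 - w / (η : ℂ)) Filter.atTop (nhdsWithin (-1) S) := by
    refine tendsto_nhdsWithin_iff.2 ⟨h1, ?_⟩
    filter_upwards [Filter.eventually_gt_atTop 0] with η h0 using hS η h0
  have h4 := hl.comp h2
  have h5 : Filter.Tendsto (fun η : ℝ => Complex.log (((-η : ℝ) : ℂ) - w) - (Real.log η : ℂ))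
      Filter.atTop (nhds l) := by
    refine h4.congr' ?_
    have h3 : ∀ᶠ η : ℝ in Filter.atTop, -1 - w / (η : ℂ) ≠ 0 := h1.eventually_ne (by simp)
    filter_upwards [h3, Filter.eventually_gt_atTop 0] with η h h0
    have hne : (η : ℂ) ≠ 0 := by exact_mod_cast h0.ne'
    have : ((-η : ℝ) : ℂ) - w = (η : ℂ) * (-1 - w / η) := by push_cast; field_simp
    rw [this, Complex.log_ofReal_mul h0 h]
    simp
  have := h5.comp Filter.tendsto_neg_atBot_atTop
  refine this.congr fun η => ?_
  simp

lemma aux_im (w : ℂ) (r : ℝ) : (-1 - w / (r : ℂ)).im = - w.im / r := by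
  simp [Complex.div_ofReal_im, neg_div]

lemma aux_bot_neg (w : ℂ) (hw : w.im < 0) :
    Filter.Tendsto (fun η : ℝ => Complex.log ((η : ℂ) - w) - (Real.log (-η) : ℂ)) Filter.atBot
      (nhds (Real.pi * I)) := by
  refine aux_bot w _ {z : ℂ | 0 ≤ z.im} (fun r hr => ?_) ?_
  · rw [Set.mem_setOf_eq]
    rw [aux_im]
    exact div_nonneg (by linarith) hr.le
  · simpa using Complex.tendsto_log_nhdsWithin_im_nonneg_of_re_neg_of_im_zero
      (z := -1) (by simp) (by simp)

lemma aux_bot_pos (w : ℂ) (hw : 0 < w.im) :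
    Filter.Tendsto (fun η : ℝ => Complex.log ((η : ℂ) - w) - (Real.log (-η) : ℂ)) Filter.atBot
      (nhds (-(Real.pi * I))) := by
  refine aux_bot w _ {z : ℂ | z.im < 0} (fun r hr => ?_) ?_
  · rw [Set.mem_setOf_eq]
    rw [aux_im]
    exact div_neg_of_neg_of_pos (by linarith) hr
  · simpa using Complex.tendsto_log_nhdsWithin_im_neg_of_re_neg_of_im_zero
      (z := -1) (by simp) (by simp)

lemma aux_ne (w : ℂ) (hw : w.im ≠ 0) (η : ℝ) : (η : ℂ) - w ≠ 0 := by
  intro h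
  apply hw
  have := congrArg Complex.im h
  simpa using this

lemma aux_deriv (w : ℂ) (hw : w.im ≠ 0) (η : ℝ) :
    HasDerivAt (fun η : ℝ => Complex.log ((η : ℂ) - w)) (1 / ((η : ℂ) - w)) η := by
  have h1 : HasDerivAt (fun η : ℝ => (η : ℂ) - w) 1 η :=
    (Complex.ofRealCLM.hasDerivAt (x := η)).sub_const w |>.congr_deriv (by simp)
  refine h1.clog_real ?_
  right
  simpa using hw

lemma aux_integrable (z : ℂ) (hz : z.im < 0) :
    Integrable (fun η : ℝ => (η : ℂ) / ((1 + (η : ℂ) ^ 2) * (z - (η : ℂ)))) := by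
  have hne : ∀ η : ℝ, z - (η : ℂ) ≠ 0 := fun η h =>
    aux_ne z hz.ne η (by rw [← neg_sub, h, neg_zero])
  have hq : ∀ η : ℝ, (1 + (η : ℂ) ^ 2) ≠ 0 := fun η => by
    have : (1 + η ^ 2 : ℝ) ≠ 0 := by positivity
    exact_mod_cast this
  refine (integrable_inv_one_add_sq.const_mul (1 + ‖z‖ / |z.im|)).mono' ?_ ?_
  · refine Continuous.aestronglyMeasurable ?_
    exact continuous_ofReal.div (by fun_prop) fun η => mul_ne_zero (hq η) (hne η)
  · refine Filter.Eventually.of_forall fun η => ?_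
    have e : (η : ℂ) / ((1 + (η : ℂ) ^ 2) * (z - (η : ℂ))) =
        (-1 + z / (z - η)) * (((1 + η ^ 2)⁻¹ : ℝ) : ℂ) := by
      have h1 := hne η
      have h2 := hq η
      push_cast
      field_simp
      ring
    have hi : |z.im| ≤ ‖z - η‖ := by simpa using Complex.abs_im_le_norm (z - η)
    have hp : 0 < |z.im| := abs_pos.2 hz.ne
    rw [e, norm_mul, Complex.norm_real, Real.norm_of_nonneg (by positivity)]
    gcongr
    refine (norm_add_le _ _).trans ?_
    rw [norm_div]
    simp only [norm_neg, norm_one]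
    gcongr

lemma aux_integral (z : ℂ) (hz : z.im < 0) (hz1 : -1 < z.im) :
    ∫ η : ℝ, (η : ℂ) / ((1 + (η : ℂ) ^ 2) * (z - (η : ℂ))) =
      2 * Real.pi * I * (1 / (2 * (z - I))) := by
  have n1 : z - I ≠ 0 := by
    intro h
    have := congrArg Complex.im h
    simp at this
    linarith
  have n2 : z + I ≠ 0 := by
    intro h
    have := congrArg Complex.im h
    simp at this
    linarith
  set A : ℂ := 1 / (2 * (z - I)) with hA
  set B : ℂ := 1 / (2 * (z + I)) with hB
  have hd : ∀ η : ℝ, HasDerivAt (fun η : ℝ => A * Complex.log ((η : ℂ) - I) +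
      B * Complex.log ((η : ℂ) - (-I)) + (-(A + B)) * Complex.log ((η : ℂ) - z))
      ((η : ℂ) / ((1 + (η : ℂ) ^ 2) * (z - (η : ℂ)))) η := by
    intro η
    refine ((((aux_deriv I (by simp) η).const_mul A).add
      ((aux_deriv (-I) (by simp) η).const_mul B)).add
      ((aux_deriv z hz.ne η).const_mul (-(A + B)))).congr_deriv ?_
    have m1 := aux_ne I (by simp) η
    have m2 := aux_ne (-I) (by simp) η
    have m3 := aux_ne z hz.ne η
    have m4 : z - (η : ℂ) ≠ 0 := by rw [← neg_sub]; exact neg_ne_zero.2 m3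
    have e : (1 + (η : ℂ) ^ 2) = (η - I) * (η - (-I)) := by ring_nf; simp [add_comm]
    have e3 : (η : ℂ) - z = -(z - η) := by ring
    rw [e, e3, hA, hB]
    simp only [sub_neg_eq_add] at *
    field_simp
    ring
  have ht := (((aux_top I).const_mul A).add ((aux_top (-I)).const_mul B)).add
    ((aux_top z).const_mul (-(A + B)))
  have hb := (((aux_bot_pos I (by simp)).const_mul A).add
    ((aux_bot_neg (-I) (by simp)).const_mul B)).add
    ((aux_bot_neg z hz).const_mul (-(A + B)))
  rw [integral_of_hasDerivAt_of_tendsto hd (aux_integrable z hz)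
    (hb.congr fun η => by ring) (ht.congr fun η => by ring)]
  ring

/-- for every real ξ, the limit as u → 0⁻ of
(1/(2πi)) ∫_{-∞}^{∞} η dη / ((1+η²)(ξ + iu − η)) equals 1/(2(ξ−i)). -/
theorem pi_plus_eta_over_one_plus_sq (ξ : ℝ) :
    Filter.Tendsto
      (fun u : ℝ =>
        (1 / (2 * (Real.pi : ℂ) * I)) *
          ∫ η : ℝ, (η : ℂ) / ((1 + (η : ℂ) ^ 2) * ((ξ : ℂ) + I * (u : ℂ) - (η : ℂ))))
      (nhdsWithin 0 (Set.Iio 0))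
      (nhds (1 / (2 * ((ξ : ℂ) - I)))) := by
  have hn : (ξ : ℂ) - I ≠ 0 := aux_ne I (by simp) ξ
  have hc : ContinuousAt (fun u : ℝ => 1 / (2 * ((ξ : ℂ) + I * (u : ℂ) - I))) 0 := by
    refine ContinuousAt.div (by fun_prop) (by fun_prop) ?_
    simpa using hn
  have ht : Filter.Tendsto (fun u : ℝ => 1 / (2 * ((ξ : ℂ) + I * (u : ℂ) - I)))
      (nhdsWithin 0 (Set.Iio 0)) (nhds (1 / (2 * ((ξ : ℂ) - I)))) := by
    have := hc.tendsto.mono_left (nhdsWithin_le_nhds (s := Set.Iio 0))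
    simpa using this
  refine ht.congr' ?_
  have h1 : ∀ᶠ u : ℝ in nhdsWithin 0 (Set.Iio 0), -1 < u :=
    nhdsWithin_le_nhds (lt_mem_nhds (by norm_num))
  filter_upwards [h1, self_mem_nhdsWithin] with u hu1 hu0
  have hu0 : u < 0 := hu0
  rw [aux_integral _ (by simpa using hu0) (by simpa using hu1)]
  have hpi : (2 * (Real.pi : ℂ) * I) ≠ 0 := by simp [Real.pi_ne_zero]
  rw [← mul_assoc, one_div_mul_cancel hpi, one_mul]
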